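/- For n ∈ ℕ, the number of disjoint Schröder n-families (n-tuples of Schröder-type paths P_i from (i,0) to (0,i) with pairwise disjoint supports) equals 2^(n(n-1)/2). -/

import Mathlib

/-- A Schröder-type path from `src` to `tgt`. -/
def IsSchroderPath (p : List (ℤ × ℤ)) (src tgt : ℤ × ℤ) : Prop :=
  p.head? = some src ∧ p.getLast? = some tgt ∧
    p.Chain' fun u v => v - u = (0, 1) ∨ v - u = (-1, 1) ∨ v - u = (-1, 0)

namespace Schroder

/-- Vertical unit shift. -/
def up (x : ℤ × ℤ) : ℤ × ℤ := (x.1, x.2 + 1)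

theorem up_inj : Function.Injective up := by
  rintro ⟨a, b⟩ ⟨c, d⟩ h
  simp [up] at h
  simp [h]

/-- Horizontal run from `(b+k,0)` to `(b,0)`. -/
def row : ℕ → ℤ → List (ℤ × ℤ)
  | 0, b => [(b, 0)]
  | k + 1, b => (b + (k + 1 : ℕ), 0) :: row k b

theorem row_length (k : ℕ) (b : ℤ) : (row k b).length = k + 1 := by
  induction k with
  | zero => rfl
  | succ k ih => simp [row, ih]

theorem mem_row (k : ℕ) (b : ℤ) (x : ℤ × ℤ) :
    x ∈ row k b ↔ x.2 = 0 ∧ b ≤ x.1 ∧ x.1 ≤ b + k := by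
  obtain ⟨x, y⟩ := x
  induction k with
  | zero => simp [row]; omega
  | succ k ih =>
    simp only [row, List.mem_cons, ih, Prod.mk.injEq]
    push_cast
    omega

theorem path_nil (s t : ℤ × ℤ) : ¬ IsSchroderPath [] s t := by simp [IsSchroderPath]

theorem path_one (u s t : ℤ × ℤ) : IsSchroderPath [u] s t ↔ u = s ∧ u = t := by
  simp [IsSchroderPath, List.Chain']

theorem path_cons (u v s t : ℤ × ℤ) (l : List (ℤ × ℤ)) :
    IsSchroderPath (u :: v :: l) s t ↔ u = s ∧
      (v - u = (0, 1) ∨ v - u = (-1, 1) ∨ v - u = (-1, 0)) ∧ IsSchroderPath (v :: l) v t := by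
  simp [IsSchroderPath, List.Chain', List.getLast?_cons_cons]
  tauto

theorem path_head {u s t : ℤ × ℤ} {l : List (ℤ × ℤ)} (h : IsSchroderPath (u :: l) s t) :
    u = s := by
  simpa using h.1

theorem path_map_up (q : List (ℤ × ℤ)) (s t : ℤ × ℤ) :
    IsSchroderPath (q.map up) (up s) (up t) ↔ IsSchroderPath q s t := by
  induction q generalizing s with
  | nil => simp [path_nil]
  | cons u q ih =>
    cases q with
    | nil => simp [path_one, up_inj.eq_iff]
    | cons v l =>
      have := ih v
      simp only [List.map_cons] at this ⊢
      rw [path_cons, path_cons, this, up_inj.eq_iff]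
      have e : up v - up u = v - u := by ext <;> simp [up]
      rw [e]

theorem path_bounds {q : List (ℤ × ℤ)} {s t : ℤ × ℤ} (h : IsSchroderPath q s t) :
    s.2 ≤ t.2 ∧ t.1 ≤ s.1 ∧ ∀ x ∈ q, s.2 ≤ x.2 := by
  induction q generalizing s with
  | nil => exact (path_nil _ _ h).elim
  | cons u q ih =>
    cases q with
    | nil =>
      obtain ⟨rfl, rfl⟩ := (path_one _ _ _).1 h
      simp
    | cons v l =>
      obtain ⟨rfl, h1, h2⟩ := (path_cons _ _ _ _ _).1 h
      obtain ⟨a, b, c⟩ := ih h2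
      have hv : u.2 ≤ v.2 ∧ v.1 ≤ u.1 := by
        simp only [Prod.ext_iff, Prod.fst_sub, Prod.snd_sub] at h1
        omega
      refine ⟨by omega, by omega, ?_⟩
      intro x hx
      rcases List.mem_cons.1 hx with rfl | hx
      · exact le_rfl
      · exact hv.1.trans (c x hx)

theorem row_cons (k : ℕ) (b : ℤ) : ∃ l, row k b = (b + k, 0) :: l := by
  cases k with
  | zero => exact ⟨[], by simp [row]⟩
  | succ k => exact ⟨_, rfl⟩

theorem row_path (k : ℕ) (b : ℤ) : IsSchroderPath (row k b) (b + k, 0) (b, 0) := by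
  induction k with
  | zero => simp [row, path_one]
  | succ k ih =>
    obtain ⟨l, hl⟩ := row_cons k b
    rw [row, hl, path_cons]
    rw [hl] at ih
    refine ⟨rfl, ?_, ih⟩
    right; right
    ext <;> simp

theorem compose (k : ℕ) (b e t : ℤ) (he : e = 0 ∨ e = 1) (q : List (ℤ × ℤ))
    (hq : IsSchroderPath q (b - e, 0) (0, t)) :
    IsSchroderPath (row k b ++ q.map up) (b + k, 0) (0, t + 1) := by
  induction k with
  | zero =>
    have h := (path_map_up _ _ _).2 hq
    cases q with
    | nil => exact (path_nil _ _ hq).elim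
    | cons u l =>
      have := path_head hq
      subst this
      simp only [row, List.map_cons, List.cons_append, List.nil_append] at h ⊢
      rw [path_cons]
      refine ⟨by simp, ?_, h⟩
      rcases he with rfl | rfl <;> simp [up]
  | succ k ih =>
    obtain ⟨l, hl⟩ := row_cons k b
    rw [row, hl, List.cons_append, List.cons_append, path_cons]
    rw [hl, List.cons_append] at ih
    refine ⟨rfl, ?_, ih⟩
    right; right
    ext <;> simp

theorem unshift (l : List (ℤ × ℤ)) : ∃ q : List (ℤ × ℤ), l = q.map up :=
  ⟨l.map fun x => (x.1, x.2 - 1), by simp [Function.comp_def, up]⟩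

theorem decompose (p : List (ℤ × ℤ)) (a t : ℤ) (ht : 0 ≤ t)
    (hp : IsSchroderPath p (a, 0) (0, t + 1)) :
    ∃ (k : ℕ) (b e : ℤ) (q : List (ℤ × ℤ)), b + k = a ∧ (e = 0 ∨ e = 1) ∧
      p = row k b ++ q.map up ∧ IsSchroderPath q (b - e, 0) (0, t) := by
  induction p generalizing a with
  | nil => exact (path_nil _ _ hp).elim
  | cons u p ih =>
    cases p with
    | nil =>
      obtain ⟨rfl, h⟩ := (path_one _ _ _).1 hp
      simp at h; omega
    | cons v l =>
      obtain ⟨rfl, h1, h2⟩ := (path_cons _ _ _ _ _).1 hp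
      have key : ∀ e : ℤ, (e = 0 ∨ e = 1) → v = (a - e, 1) →
          ∃ (k : ℕ) (b e : ℤ) (q : List (ℤ × ℤ)), b + k = a ∧ (e = 0 ∨ e = 1) ∧
          (a, 0) :: v :: l = row k b ++ q.map up ∧ IsSchroderPath q (b - e, 0) (0, t) := by
        intro e he hv
        obtain ⟨q, hq⟩ := unshift (v :: l)
        refine ⟨0, a, e, q, by simp, he, by simp [row, hq], ?_⟩
        rw [← path_map_up, ← hq]
        have : up (a - e, 0) = v := by rw [hv]; simp [up]
        rw [this]
        exact h2
      rcases h1 with h | h | h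
      · exact key 0 (by simp) (by rw [sub_eq_iff_eq_add] at h; rw [h]; simp)
      · exact key 1 (by simp) (by rw [sub_eq_iff_eq_add] at h; rw [h]; simp; ring)
      · have hv : v = (a - 1, 0) := by rw [sub_eq_iff_eq_add] at h; rw [h]; simp; ring
        subst hv
        obtain ⟨k, b, e, q, hk, he, hl, hq⟩ := ih (a - 1) h2
        refine ⟨k + 1, b, e, q, by push_cast; omega, he, ?_, hq⟩
        rw [hl, row, List.cons_append]
        have : b + ((k + 1 : ℕ) : ℤ) = a := by push_cast; omega
        rw [this]

theorem path_zero (p : List (ℤ × ℤ)) (k : ℕ)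
    (hp : IsSchroderPath p (k, 0) (0, 0)) : p = row k 0 := by
  induction p generalizing k with
  | nil => exact (path_nil _ _ hp).elim
  | cons u p ih =>
    cases p with
    | nil =>
      obtain ⟨rfl, h⟩ := (path_one _ _ _).1 hp
      simp at h
      subst h
      simp [row]
    | cons v l =>
      obtain ⟨rfl, h1, h2⟩ := (path_cons _ _ _ _ _).1 hp
      obtain ⟨ha, hb, -⟩ := path_bounds h2
      have hv : v = ((k : ℤ) - 1, 0) := by
        simp only [Prod.ext_iff, Prod.fst_sub, Prod.snd_sub] at h1 ha ⊢
        omega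
      subst hv
      cases k with
      | zero => simp at hb
      | succ k =>
        have : (((k + 1 : ℕ) : ℤ) - 1) = k := by simp
        rw [this] at h2 ih ⊢
        rw [ih k h2, row]
        simp

theorem filter_eq (k : ℕ) (b : ℤ) (q : List (ℤ × ℤ)) (hq : ∀ x ∈ q, 0 ≤ x.2) :
    (row k b ++ q.map up).filter (fun x => x.2 = 0) = row k b := by
  have h1 : (row k b).filter (fun x => x.2 = 0) = row k b := by
    rw [List.filter_eq_self]
    intro x hx
    simpa using ((mem_row _ _ _).1 hx).1
  have h2 : (q.map up).filter (fun x => x.2 = 0) = [] := by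
    rw [List.filter_eq_nil_iff]
    intro x hx
    obtain ⟨y, hy, rfl⟩ := List.mem_map.1 hx
    have := hq y hy
    have h3 : (up y).2 ≠ 0 := by simp only [up]; omega
    simpa using h3
  rw [List.filter_append, h1, h2, List.append_nil]

theorem unique (k k' : ℕ) (b b' : ℤ) (q q' : List (ℤ × ℤ)) (hq : ∀ x ∈ q, 0 ≤ x.2)
    (hq' : ∀ x ∈ q', 0 ≤ x.2) (h : row k b ++ q.map up = row k' b' ++ q'.map up) :
    k = k' ∧ q = q' := by
  have h1 := congrArg (List.filter (fun x : ℤ × ℤ => x.2 = 0)) h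
  rw [filter_eq _ _ _ hq, filter_eq _ _ _ hq'] at h1
  have h2 := congrArg List.length h1
  rw [row_length, row_length] at h2
  refine ⟨by omega, ?_⟩
  rw [h1] at h
  exact List.map_injective_iff.2 up_inj (List.append_cancel_left h)

/-- Disjoint families with starting points `(a i, 0)`. -/
def Fam (m : ℕ) (a : Fin m → ℕ) : Type :=
  {P : Fin m → List (ℤ × ℤ) //
        (∀ i : Fin m, IsSchroderPath (P i) ((a i : ℤ), 0) (0, (i : ℤ))) ∧
        ∀ i j : Fin m, i ≠ j → ∀ x : ℤ × ℤ, x ∈ P i → x ∉ P j}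

/-- Possible first-row data. -/
def A {m : ℕ} (a : Fin (m + 1) → ℕ) (i : Fin m) : Finset (ℕ × ℕ) :=
  Finset.Ioc (a i.castSucc) (a i.succ) ×ˢ Finset.range 2

theorem mem_A {m : ℕ} (a : Fin (m + 1) → ℕ) (i : Fin m) (x : ℕ × ℕ) :
    x ∈ A a i ↔ (a i.castSucc < x.1 ∧ x.1 ≤ a i.succ) ∧ x.2 < 2 := by
  simp [A]

/-- The new starting points. -/
def nxt {m : ℕ} (r : Fin m → ℕ × ℕ) (i : Fin m) : ℕ := (r i).1 - (r i).2

/-- Glue the first row to the rest. -/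
def glue {m : ℕ} (a : Fin (m + 1) → ℕ) (r : Fin m → ℕ × ℕ) (Q : Fin m → List (ℤ × ℤ)) :
    Fin (m + 1) → List (ℤ × ℤ) :=
  Fin.cons (row (a 0) 0) fun i => row (a i.succ - (r i).1) (r i).1 ++ (Q i).map up

theorem nxt_mono {m : ℕ} (a : Fin (m + 1) → ℕ) (ha : Monotone a) (r : Fin m → ℕ × ℕ)
    (hr : ∀ i, r i ∈ A a i) : Monotone (nxt r) := by
  intro i j hij
  rcases hij.eq_or_lt with rfl | hij
  · exact le_rfl
  · have h1 := (mem_A _ _ _).1 (hr i)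
    have h2 := (mem_A _ _ _).1 (hr j)
    have h3 : a i.succ ≤ a j.castSucc := ha (by
      rw [Fin.le_def]; simp; omega)
    simp only [nxt]
    omega

theorem nxt_cast {m : ℕ} (a : Fin (m + 1) → ℕ) (r : Fin m → ℕ × ℕ)
    (hr : ∀ i, r i ∈ A a i) (i : Fin m) :
    ((nxt r i : ℕ) : ℤ) = ((r i).1 : ℤ) - ((r i).2 : ℤ) := by
  have h1 := (mem_A _ _ _).1 (hr i)
  simp only [nxt]
  omega

theorem glue_path {m : ℕ} (a : Fin (m + 1) → ℕ) (r : Fin m → ℕ × ℕ)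
    (hr : ∀ i, r i ∈ A a i) (Q : Fin m → List (ℤ × ℤ))
    (hQ : ∀ i : Fin m, IsSchroderPath (Q i) ((nxt r i : ℤ), 0) (0, (i : ℤ))) (i : Fin (m + 1)) :
    IsSchroderPath (glue a r Q i) ((a i : ℤ), 0) (0, (i : ℤ)) := by
  refine Fin.cases ?_ (fun i => ?_) i
  · simpa [glue] using row_path (a 0) 0
  · have h1 := (mem_A _ _ _).1 (hr i)
    have := hQ i
    rw [nxt_cast a r hr] at this
    have h := compose (a i.succ - (r i).1) (r i).1 (r i).2 i (by omega) (Q i) this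
    have e : ((r i).1 : ℤ) + ((a i.succ - (r i).1 : ℕ) : ℤ) = a i.succ := by omega
    rw [e] at h
    simpa [glue] using h

theorem mem_glue_succ {m : ℕ} (a : Fin (m + 1) → ℕ) (r : Fin m → ℕ × ℕ)
    (hr : ∀ i, r i ∈ A a i) (Q : Fin m → List (ℤ × ℤ)) (i : Fin m) (x : ℤ × ℤ) :
    x ∈ glue a r Q i.succ ↔ (x.2 = 0 ∧ ((r i).1 : ℤ) ≤ x.1 ∧ x.1 ≤ a i.succ) ∨
      ∃ y ∈ Q i, up y = x := by
  have h1 := (mem_A _ _ _).1 (hr i)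
  have e : ((r i).1 : ℤ) + ((a i.succ - (r i).1 : ℕ) : ℤ) = a i.succ := by omega
  simp [glue, mem_row, e]

theorem mem_glue_zero {m : ℕ} (a : Fin (m + 1) → ℕ) (r : Fin m → ℕ × ℕ)
    (Q : Fin m → List (ℤ × ℤ)) (x : ℤ × ℤ) :
    x ∈ glue a r Q 0 ↔ (x.2 = 0 ∧ 0 ≤ x.1 ∧ x.1 ≤ a 0) := by
  simp [glue, mem_row]

theorem glue_disj {m : ℕ} (a : Fin (m + 1) → ℕ) (ha : Monotone a) (r : Fin m → ℕ × ℕ)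
    (hr : ∀ i, r i ∈ A a i) (Q : Fin m → List (ℤ × ℤ))
    (hQ : ∀ i : Fin m, IsSchroderPath (Q i) ((nxt r i : ℤ), 0) (0, (i : ℤ)))
    (hd : ∀ i j : Fin m, i ≠ j → ∀ x : ℤ × ℤ, x ∈ Q i → x ∉ Q j) (i j : Fin (m + 1))
    (hij : i ≠ j) (x : ℤ × ℤ) (hi : x ∈ glue a r Q i) (hj : x ∈ glue a r Q j) : False := by
  wlog hlt : i < j generalizing i j
  · exact this j i hij.symm hj hi (lt_of_le_of_ne (not_lt.1 hlt) hij.symm)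
  have hpos : ∀ i, ∀ y ∈ Q i, 0 ≤ y.2 := fun i => (path_bounds (hQ i)).2.2
  obtain ⟨j, rfl⟩ := Fin.exists_succ_eq.2 (Fin.ne_zero_of_lt hlt)
  have h2 := (mem_A _ _ _).1 (hr j)
  have h3 : a i ≤ a j.castSucc := ha (Fin.le_castSucc_iff.2 hlt)
  rw [mem_glue_succ a r hr] at hj
  revert hi h3 hlt hij
  refine Fin.cases ?_ (fun i => ?_) i
  · intro hi _ _ h3
    rw [mem_glue_zero] at hi
    rcases hj with hj | ⟨y, hy, rfl⟩
    · omega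
    · have := hpos j y hy
      simp only [up] at hi
      omega
  · intro hi hij _ h3
    rw [mem_glue_succ a r hr] at hi
    rcases hi with hi | ⟨z, hz, rfl⟩ <;> rcases hj with hj | ⟨y, hy, hyz⟩
    · omega
    · have := hpos j y hy
      subst hyz
      simp only [up] at hi
      omega
    · have := hpos i z hz
      simp only [up] at hj
      omega
    · have := up_inj hyz
      subst this
      exact hd i j (fun h => hij (by rw [h])) _ hz hy

/-- The gluing map. -/
def glueMap {m : ℕ} (a : Fin (m + 1) → ℕ) (ha : Monotone a)
    (X : Σ r : {r // r ∈ Fintype.piFinset (A a)}, Fam m (nxt r.1)) : Fam (m + 1) a :=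
  ⟨glue a X.1.1 X.2.1,
    glue_path a _ (Fintype.mem_piFinset.1 X.1.2) _ X.2.2.1,
    fun i j hij x hi hj =>
      glue_disj a ha _ (Fintype.mem_piFinset.1 X.1.2) _ X.2.2.1 X.2.2.2 i j hij x hi hj⟩

theorem glueMap_inj {m : ℕ} (a : Fin (m + 1) → ℕ) (ha : Monotone a) :
    Function.Injective (glueMap a ha) := by
  rintro ⟨⟨r, hr⟩, ⟨Q, hQ, hQd⟩⟩ ⟨⟨r', hr'⟩, ⟨Q', hQ', hQd'⟩⟩ h
  have h0 : glue a r Q = glue a r' Q' := congrArg Subtype.val h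
  rw [Fintype.mem_piFinset] at hr hr'
  have key : ∀ i, r i = r' i ∧ Q i = Q' i := by
    intro i
    have h1 := congrFun h0 i.succ
    simp only [glue, Fin.cons_succ] at h1
    obtain ⟨hk, hq⟩ := unique _ _ _ _ _ _ (path_bounds (hQ i)).2.2 (path_bounds (hQ' i)).2.2 h1
    refine ⟨?_, hq⟩
    have a1 := (mem_A _ _ _).1 (hr i)
    have a2 := (mem_A _ _ _).1 (hr' i)
    have b1 := (hQ i).1
    have b2 := (hQ' i).1
    simp only at b1 b2
    rw [hq, b2] at b1
    simp only [Option.some.injEq, Prod.mk.injEq, and_true, nxt] at b1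
    ext <;> omega
  obtain rfl : r = r' := funext fun i => (key i).1
  obtain rfl : Q = Q' := funext fun i => (key i).2
  rfl

theorem glueMap_surj {m : ℕ} (a : Fin (m + 1) → ℕ) (ha : Monotone a) :
    Function.Surjective (glueMap a ha) := by
  rintro ⟨P, hP, hd⟩
  have hs : ∀ i : Fin m, ∃ (k : ℕ) (b e : ℤ) (q : List (ℤ × ℤ)), b + k = a i.succ ∧
      (e = 0 ∨ e = 1) ∧ P i.succ = row k b ++ q.map up ∧
      IsSchroderPath q (b - e, 0) (0, (i : ℤ)) := by
    intro i
    apply decompose _ _ _ (by omega)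
    simpa using hP i.succ
  choose k b e q hk he hp hq using hs
  have h0 : P 0 = row (a 0) 0 := path_zero _ _ (by simpa using hP 0)
  have hab : ∀ i : Fin m, (a i.castSucc : ℤ) < b i := by
    intro i
    by_contra hcon
    have hle : a i.castSucc ≤ a i.succ := ha (Fin.castSucc_lt_succ).le
    have h1 : ((a i.castSucc : ℤ), (0 : ℤ)) ∈ P i.succ := by
      rw [hp, List.mem_append, mem_row]
      left
      have := hk i
      simp only [true_and]
      omega
    have h2 : ((a i.castSucc : ℤ), (0 : ℤ)) ∈ P i.castSucc :=
      List.mem_of_mem_head? (by rw [(hP i.castSucc).1]; simp)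
    exact hd _ _ (Fin.castSucc_lt_succ).ne _ h2 h1
  set r : Fin m → ℕ × ℕ := fun i => ((b i).toNat, (e i).toNat) with hrdef
  have hr : ∀ i, r i ∈ A a i := by
    intro i
    rw [mem_A]
    have := hab i
    have := hk i
    have := he i
    simp only [hrdef]
    omega
  have hb : ∀ i, (((b i).toNat : ℕ) : ℤ) = b i := fun i => by have := hab i; omega
  have hQ : ∀ i : Fin m, IsSchroderPath (q i) ((nxt r i : ℤ), 0) (0, (i : ℤ)) := by
    intro i
    rw [nxt_cast a r hr]
    have : ((r i).1 : ℤ) - ((r i).2 : ℤ) = b i - e i := by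
      have := he i
      have := hb i
      simp only [hrdef]
      omega
    rw [this]
    exact hq i
  have hQd : ∀ i j : Fin m, i ≠ j → ∀ x : ℤ × ℤ, x ∈ q i → x ∉ q j := by
    intro i j hij x hi hj
    refine hd i.succ j.succ (by simpa using hij) (up x) ?_ ?_
    · rw [hp, List.mem_append]
      exact Or.inr (List.mem_map_of_mem hi)
    · rw [hp, List.mem_append]
      exact Or.inr (List.mem_map_of_mem hj)
  refine ⟨⟨⟨r, Fintype.mem_piFinset.2 hr⟩, ⟨q, hQ, hQd⟩⟩, ?_⟩
  apply Subtype.ext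
  funext i
  refine Fin.cases ?_ (fun i => ?_) i
  · simp [glueMap, glue, h0]
  · simp only [glueMap, glue, Fin.cons_succ, hp]
    have e1 : a i.succ - (b i).toNat = k i := by
      have := hk i
      have := hb i
      omega
    simp only [hrdef, e1, hb]

/-- Delannoy numbers. -/
def D (x j : ℕ) : ℤ := ∑ k ∈ Finset.range (j + 1), 2 ^ k * (x.choose k : ℤ) * (j.choose k : ℤ)

theorem D_eq (x j N : ℕ) (h : j < N) :
    D x j = ∑ k ∈ Finset.range N, 2 ^ k * (x.choose k : ℤ) * (j.choose k : ℤ) := by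
  refine Finset.sum_subset (by intro; simp; omega) ?_
  intro k _ hk
  simp at hk
  rw [Nat.choose_eq_zero_of_lt (show j < k by omega)]
  simp

theorem D_zero (x : ℕ) : D x 0 = 1 := by simp [D]

theorem D_rec (x j : ℕ) : D (x + 1) (j + 1) - D x (j + 1) = D (x + 1) j + D x j := by
  rw [D_eq (x + 1) (j + 1) (j + 2 + 1) (by omega), D_eq x (j + 1) (j + 2 + 1) (by omega),
    D_eq (x + 1) j (j + 2 + 1) (by omega)]
  have h2 := D_eq x j (j + 2) (by omega)
  have h3 := D_eq x j (j + 2 + 1) (by omega)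
  rw [Finset.sum_range_succ'] at h3
  simp only [Finset.sum_range_succ' _ (j + 2)]
  have key : ∑ k ∈ Finset.range (j + 2),
      2 ^ (k + 1) * ((x + 1).choose (k + 1) : ℤ) * ((j + 1).choose (k + 1) : ℤ) -
      ∑ k ∈ Finset.range (j + 2), 2 ^ (k + 1) * (x.choose (k + 1) : ℤ) * ((j + 1).choose (k + 1) : ℤ)
      = ∑ k ∈ Finset.range (j + 2),
      2 ^ (k + 1) * ((x + 1).choose (k + 1) : ℤ) * (j.choose (k + 1) : ℤ) -
      ∑ k ∈ Finset.range (j + 2), 2 ^ (k + 1) * (x.choose (k + 1) : ℤ) * (j.choose (k + 1) : ℤ)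
      + 2 * ∑ k ∈ Finset.range (j + 2), 2 ^ k * (x.choose k : ℤ) * (j.choose k : ℤ) := by
    rw [Finset.mul_sum, ← Finset.sum_sub_distrib, ← Finset.sum_sub_distrib,
      ← Finset.sum_add_distrib]
    refine Finset.sum_congr rfl fun k _ => ?_
    rw [Nat.choose_succ_succ x k, Nat.choose_succ_succ j k]
    push_cast
    ring
  rw [← h2] at key
  simp only [pow_zero, Nat.choose_zero_right, Nat.cast_one, mul_one] at h3 ⊢
  linarith

theorem D_tele (a c j : ℕ) (h : a ≤ c) :
    ∑ x ∈ Finset.Ioc a c ×ˢ Finset.range 2, D (x.1 - x.2) j = D c (j + 1) - D a (j + 1) := by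
  rw [Finset.sum_product]
  induction c, h using Nat.le_induction with
  | base => simp
  | succ c hc ih =>
    rw [Finset.sum_Ioc_succ_top (by omega), ih]
    have := D_rec c j
    simp [Finset.sum_range_succ]
    linarith

theorem det_step {m : ℕ} (a : Fin (m + 1) → ℕ) (ha : Monotone a) :
    (Matrix.of fun i j : Fin (m + 1) => D (a i) j).det =
      ∑ r ∈ Fintype.piFinset (A a), (Matrix.of fun i j : Fin m => D (nxt r i) j).det := by
  have h1 := (Matrix.detRowAlternating (n := Fin m) (R := ℤ)).toMultilinearMap.map_sum_finset
    (fun (i : Fin m) (x : ℕ × ℕ) => fun j : Fin m => D (x.1 - x.2) j) (A a)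
  have h2 : ∑ r ∈ Fintype.piFinset (A a), (Matrix.of fun i j : Fin m => D (nxt r i) j).det =
    (Matrix.of fun i j : Fin m => D (a i.succ) (j + 1) - D (a i.castSucc) (j + 1)).det := by
    refine Eq.trans ?_ (h1.symm.trans ?_)
    · rfl
    · refine congrArg Matrix.det ?_
      ext i j
      rw [Finset.sum_apply]
      exact D_tele _ _ _ (ha (Fin.castSucc_lt_succ).le)
  rw [h2]
  rw [Matrix.det_eq_of_forall_row_eq_smul_add_pred (A := Matrix.of fun i j : Fin (m + 1) => D (a i) j)
    (B := Matrix.of (Fin.cons (fun j => D (a 0) j)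
      fun (i : Fin m) (j : Fin (m + 1)) => D (a i.succ) j - D (a i.castSucc) j)) (fun _ => 1)
      (by intro j; simp) (by intro i j; simp)]
  rw [Matrix.det_succ_column_zero, Fin.sum_univ_succ]
  simp [D_zero]
  rfl

theorem card_fam (m : ℕ) (a : Fin m → ℕ) (ha : Monotone a) :
    Finite (Fam m a) ∧ (Nat.card (Fam m a) : ℤ) = (Matrix.of fun i j : Fin m => D (a i) j).det := by
  induction m with
  | zero =>
    have : Unique (Fam 0 a) :=
      { default := ⟨fun i => i.elim0, fun i => i.elim0, fun i => i.elim0⟩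
        uniq := fun x => Subtype.ext (funext fun i => i.elim0) }
    refine ⟨inferInstance, by simp⟩
  | succ m ih =>
    have ih' : ∀ r : {r // r ∈ Fintype.piFinset (A a)}, _ := fun r =>
      ih (nxt r.1) (nxt_mono a ha r.1 (Fintype.mem_piFinset.1 r.2))
    have : ∀ r : {r // r ∈ Fintype.piFinset (A a)}, Finite (Fam m (nxt r.1)) := fun r => (ih' r).1
    have hbij : Function.Bijective (glueMap a ha) := ⟨glueMap_inj a ha, glueMap_surj a ha⟩
    refine ⟨Finite.of_surjective _ hbij.2, ?_⟩
    rw [← Nat.card_congr (Equiv.ofBijective _ hbij), Nat.card_sigma, det_step a ha]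
    push_cast
    rw [Finset.sum_congr rfl fun r _ => (ih' r).2]
    exact Finset.sum_coe_sort (Fintype.piFinset (A a))
      (fun r => (Matrix.of fun i j : Fin m => D (nxt r i) j).det)

theorem det_D (n : ℕ) :
    (Matrix.of fun i j : Fin n => D (i : ℕ) j).det = 2 ^ (n * (n - 1) / 2) := by
  let L : Matrix (Fin n) (Fin n) ℤ := Matrix.of fun i k => ((i : ℕ).choose k : ℤ)
  have hL : L.det = 1 := by
    rw [Matrix.det_of_isLowerTriangular]
    · simp [L]
    · intro i j hij
      have : (i : ℕ) < j := hij
      simp [L, Nat.choose_eq_zero_of_lt this]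
  have h : (Matrix.of fun i j : Fin n => D (i : ℕ) j) =
      L * Matrix.diagonal (fun k : Fin n => (2 : ℤ) ^ (k : ℕ)) * L.transpose := by
    ext i j
    rw [Matrix.mul_apply]
    simp only [Matrix.mul_diagonal, Matrix.transpose_apply, Matrix.of_apply, L]
    rw [D_eq _ _ n j.2, ← Fin.sum_univ_eq_sum_range
      (fun k => 2 ^ k * ((i : ℕ).choose k : ℤ) * ((j : ℕ).choose k : ℤ))]
    exact Finset.sum_congr rfl fun k _ => by ring
  rw [h, Matrix.det_mul, Matrix.det_mul, Matrix.det_transpose, hL, Matrix.det_diagonal,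
    Finset.prod_pow_eq_pow_sum, Fin.sum_univ_eq_sum_range (fun k => k), Finset.sum_range_id]
  simp

end Schroder

theorem card_disjoint_families (n : ℕ) :
    Nat.card {P : Fin n → List (ℤ × ℤ) //
        (∀ i : Fin n, IsSchroderPath (P i) ((i : ℤ), 0) (0, (i : ℤ))) ∧
        ∀ i j : Fin n, i ≠ j → ∀ x : ℤ × ℤ, x ∈ P i → x ∉ P j}
      = 2 ^ (n * (n - 1) / 2) := by
  have h := (Schroder.card_fam n (fun i => (i : ℕ)) (fun i j hij => hij)).2
  rw [Schroder.det_D] at h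
  exact_mod_cast h
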